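/- Let x = Σ_{n=1}^m x_n e_n be a finitely supported element of ℓ₁ with x_1 ≠ 0 (so that ϑ_n(x) > 0 for all n ≥ 1), and define recursively, for y ∈ ℓ₁, 𝓕^0_x(y) = 0 and 𝓕^n_x(y) = ( ϑ_{n−1}(x)^{p_n−1} · 𝓕^{n−1}_x(y) + sgn(x_n)|x_n|^{p_n−1} y_n ) / ϑ_n(x)^{p_n−1} for 1 ≤ n ≤ m. Then 𝓕^m_x is the norming functional for x in (ℝ^m, ϑ_m): 𝓕^m_x(x) = ϑ_m(x) and |𝓕^m_x(y)| ≤ ϑ_m(y) for every y. -/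

import Mathlib

/-!
The pair of numbers `(ϑ_n(x), |x_n|)` has `ℓ^p`-norm `ϑ_{n+1}(x)` for `p = p_n`, and `𝓕^{n+1}_x`
pairs `(𝓕^n_x(y), y_n)` with the norming functional of that pair in `ℓ^p` of dimension two. Both
claims therefore pass from `n` to `n + 1`: the equality because `a^{p-1}·a + b^{p-1}·b` is the
`p`-th power of the `ℓ^p`-norm of `(a, b)`, and the bound by Hölder's inequality
(`holder_two`) applied to `|𝓕^n_x(y)| ≤ ϑ_n(y)` and `|y_n|`. If `ϑ_{n+1}(x) = 0`, the division by
`0 ^ (p - 1) = 0` makes `𝓕^{n+1}_x` vanish, and both claims hold trivially.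
-/

open Filter Topology

/-- The recursively defined functionals `ϑ_n` (0-based indexing: the exponent
`p k` here is the paper's `p_{k+1}`, and the coordinate `x k` is the paper's
`x_{k+1}`): `ϑ_0(x) = 0` and
`ϑ_{n+1}(x) = (ϑ_n(x)^{p n} + |x n|^{p n})^{1/(p n)}`; `ϑ_n` depends only on the
first `n` coordinates of `x`. -/
noncomputable def vth (p : ℕ → ℝ) : ℕ → (ℕ → ℝ) → ℝ
  | 0, _ => 0
  | n + 1, x => (vth p n x ^ p n + |x n| ^ p n) ^ (1 / p n)

/-- The recursively defined functionals `𝓕^n_x` (0-based indexing as in `vth`):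
`𝓕^0_x(y) = 0` and
`𝓕^{n+1}_x(y) = (ϑ_n(x)^{pₙ−1} 𝓕^n_x(y) + sgn(xₙ)|xₙ|^{pₙ−1} yₙ)/ϑ_{n+1}(x)^{pₙ−1}`. -/
noncomputable def calF (p : ℕ → ℝ) (x : ℕ → ℝ) : ℕ → (ℕ → ℝ) → ℝ
  | 0, _ => 0
  | n + 1, y =>
      (vth p n x ^ (p n - 1) * calF p x n y +
        Real.sign (x n) * |x n| ^ (p n - 1) * y n) / vth p (n + 1) x ^ (p n - 1)

theorem vth_nonneg (p : ℕ → ℝ) (n : ℕ) (x : ℕ → ℝ) : 0 ≤ vth p n x := by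
  induction n with
  | zero => exact le_rfl
  | succ n ih => simp only [vth]; positivity

theorem vth_succ_rpow {p : ℕ → ℝ} (hp : ∀ n, 1 < p n) (n : ℕ) (x : ℕ → ℝ) :
    vth p (n + 1) x ^ p n = vth p n x ^ p n + |x n| ^ p n := by
  have h0 := vth_nonneg p n x
  have hpn : p n ≠ 0 := by linarith [hp n]
  simp only [vth]
  rw [one_div, Real.rpow_inv_rpow (by positivity) hpn]

theorem rpow_sub_one_mul_self {a p : ℝ} (ha : 0 ≤ a) (hp : 1 < p) :
    a ^ (p - 1) * a = a ^ p := by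
  rw [← Real.rpow_add_one' ha (by linarith), sub_add_cancel]

theorem abs_sign_le_one (r : ℝ) : |Real.sign r| ≤ 1 := by
  rcases Real.sign_apply_eq r with h | h | h <;> simp [h]

/-- Hölder's inequality in dimension two, with the dual vector written as the `(p - 1)`-th power
of a nonnegative vector `(a, b)`. -/
theorem holder_two {p a b u v : ℝ} (hp : 1 < p) (ha : 0 ≤ a) (hb : 0 ≤ b)
    (hu : 0 ≤ u) (hv : 0 ≤ v) :
    a ^ (p - 1) * u + b ^ (p - 1) * v ≤
      ((a ^ p + b ^ p) ^ (1 / p)) ^ (p - 1) * (u ^ p + v ^ p) ^ (1 / p) := by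
  have hp1 : p - 1 ≠ 0 := by linarith
  have hp0 : p ≠ 0 := by linarith
  have h := Real.inner_le_Lp_mul_Lq_of_nonneg (s := Finset.univ)
    (f := ![a ^ (p - 1), b ^ (p - 1)]) (g := ![u, v])
    (Real.HolderConjugate.conjExponent hp).symm
    (by intro i _; fin_cases i <;> simp <;> positivity)
    (by intro i _; fin_cases i <;> simpa)
  simp only [Fin.sum_univ_two, Matrix.cons_val_zero, Matrix.cons_val_one] at h
  have e : (p - 1) * p.conjExponent = p := by
    rw [Real.conjExponent]; field_simp
  rw [← Real.rpow_mul ha, ← Real.rpow_mul hb, e] at h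
  rw [← Real.rpow_mul (by positivity)]
  have e2 : 1 / p * (p - 1) = 1 / p.conjExponent := by
    rw [Real.conjExponent]; field_simp
  rwa [e2]

theorem calF_self {p : ℕ → ℝ} (hp : ∀ n, 1 < p n) (x : ℕ → ℝ) (n : ℕ) :
    calF p x n x = vth p n x := by
  induction n with
  | zero => rfl
  | succ n ih =>
    have hp1 : p n - 1 ≠ 0 := by linarith [hp n]
    have hs : Real.sign (x n) * |x n| ^ (p n - 1) * x n = |x n| ^ p n := by
      rw [← rpow_sub_one_mul_self (abs_nonneg _) (hp n), mul_right_comm, mul_comm]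
      congr 1
      rcases lt_trichotomy (x n) 0 with h | h | h
      · rw [Real.sign_of_neg h, abs_of_neg h]; ring
      · simp [h]
      · rw [Real.sign_of_pos h, abs_of_pos h, one_mul]
    have hc := vth_nonneg p (n + 1) x
    rw [calF, ih, hs, rpow_sub_one_mul_self (vth_nonneg p n x) (hp n), ← vth_succ_rpow hp,
      ← rpow_sub_one_mul_self hc (hp n)]
    rcases hc.eq_or_lt with h | h
    -- In the degenerate case both sides vanish, the left one through division by zero.
    · rw [← h, Real.zero_rpow hp1]; simp
    · exact mul_div_cancel_left₀ _ (Real.rpow_pos_of_pos h _).ne'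

theorem abs_calF_le {p : ℕ → ℝ} (hp : ∀ n, 1 < p n) (x y : ℕ → ℝ) (n : ℕ) :
    |calF p x n y| ≤ vth p n y := by
  induction n with
  | zero => simp [calF, vth]
  | succ n ih =>
    have ha := vth_nonneg p n x
    have hc := vth_nonneg p (n + 1) x
    have hcp : 0 ≤ vth p (n + 1) x ^ (p n - 1) := Real.rpow_nonneg hc _
    rw [calF, abs_div, abs_of_nonneg hcp]
    refine div_le_of_le_mul₀ hcp (vth_nonneg p (n + 1) y) ?_
    have hb : 0 ≤ |x n| ^ (p n - 1) := by positivity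
    calc |vth p n x ^ (p n - 1) * calF p x n y + Real.sign (x n) * |x n| ^ (p n - 1) * y n|
        ≤ vth p n x ^ (p n - 1) * |calF p x n y|
            + |Real.sign (x n)| * |x n| ^ (p n - 1) * |y n| := by
          refine (abs_add_le _ _).trans_eq ?_
          rw [abs_mul, abs_mul, abs_mul, abs_of_nonneg (Real.rpow_nonneg ha _),
            abs_of_nonneg hb]
      _ ≤ vth p n x ^ (p n - 1) * vth p n y + 1 * |x n| ^ (p n - 1) * |y n| := by
          gcongr
          exact abs_sign_le_one _
      _ ≤ vth p (n + 1) y * vth p (n + 1) x ^ (p n - 1) := by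
          rw [one_mul, mul_comm (vth p (n + 1) y)]
          exact holder_two (hp n) ha (abs_nonneg _) (vth_nonneg p n y) (abs_nonneg _)

/-- **Lemma 7.** Let `x` be finitely supported (coordinates `≥ m`
vanish) with first coordinate nonzero (so `ϑ_n(x) > 0` for `n ≥ 1`).  Then `𝓕^m_x`
is the norming functional for `x` in `(ℝ^m, ϑ_m)`: `𝓕^m_x(x) = ϑ_m(x)` and
`|𝓕^m_x(y)| ≤ ϑ_m(y)` for all `y`. -/
theorem calF_is_norming (p : ℕ → ℝ) (hp : ∀ n, 1 < p n) (hpa : Antitone p)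
    (x : ℕ → ℝ) (m : ℕ) (hm : 1 ≤ m) (hx0 : x 0 ≠ 0)
    (hsupp : ∀ n, m ≤ n → x n = 0) :
    calF p x m x = vth p m x ∧ ∀ y : ℕ → ℝ, |calF p x m y| ≤ vth p m y := by
  exact ⟨calF_self hp x m, fun y => abs_calF_le hp x y m⟩
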